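/- There are absolute constants C₁, C₂ > 0 such that, in the mean value setup with ε_m = 1 for every m ∈ 𝓜, one has 𝓘(𝓜,Q) ≤ C₁ · T · 𝓙(𝓜,Q) and T · 𝓙(𝓜,Q) ≤ C₂ · 𝓘(𝓜,Q). -/

import Mathlib

/-!
Both inequalities come from the weight `1 - t/A` on `[0, A]`, whose cosine transform
`∫₀ᴬ (1 - t/A) cos (t x) dt = (1 - cos (A x)) / (A x²)` is nonnegative, of size at least
`2A/π²` for `|A x| ≤ π`, and at most `min (A, 2 / (A x²))` everywhere.

Write the product of the two Dirichlet polynomials as `F(t) = ∑ aⱼ exp (-i t xⱼ)` with `aⱼ ≥ 0`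
and `xⱼ = log (m n)`. Since the `aⱼ` are real, `|F(t)|² = ∑ aⱼ aₖ cos (t (xⱼ - xₖ))`.

* For the lower bound on `∫₀ᵀ |F|²`, insert the weight with `A = T/2`. All the terms of the
  resulting double sum are nonnegative, and those with `|xⱼ - xₖ| ≤ 2π/T` are `≥ (T/π²) aⱼ aₖ`.
* For the upper bound, `1 ≤ 2 (1 - t/(2T))` on `[0, T]`, so that the weight with `A = 2T` may be
  inserted. Sort the frequencies into bins of length `2π/T`: the transform is `≪ T / d²` at the
  difference of two frequencies whose bins are `d` apart. Schur's test bounds the double sum by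
  `≪ T` times the sum over the bins of `(∑ aⱼ)²`, and two frequencies in the same bin differ by at
  most `2π/T`.
-/

open scoped Classical

/-- The cosine transform of the triangular weight `1 - t/A` on `[0, A]`. -/
noncomputable def fejerK (A x : ℝ) : ℝ := ∫ t in (0 : ℝ)..A, (1 - t / A) * Real.cos (t * x)

lemma fejerK_eq {A x : ℝ} (hA : 0 < A) (hx : x ≠ 0) :
    fejerK A x = (1 - Real.cos (A * x)) / (A * x ^ 2) := by
  have hd : ∀ t ∈ Set.uIcc 0 A, HasDerivAt
      (fun t : ℝ => (1 - t / A) * (Real.sin (t * x) / x) - Real.cos (t * x) / (A * x ^ 2))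
      ((1 - t / A) * Real.cos (t * x)) t := by
    intro t _
    have h0 : HasDerivAt (fun t : ℝ => t * x) x t := by
      simpa using (hasDerivAt_id t).mul_const x
    have h1 : HasDerivAt (fun t : ℝ => 1 - t / A) (-(1 / A)) t := by
      simpa using ((hasDerivAt_id t).div_const A).const_sub 1
    refine ((h1.mul (h0.sin.div_const x)).sub
      (h0.cos.div_const (A * x ^ 2))).congr_deriv ?_
    field_simp
    ring
  unfold fejerK
  rw [intervalIntegral.integral_eq_sub_of_hasDerivAt hd
    (Continuous.intervalIntegrable (by fun_prop) _ _)]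
  simp [hA.ne']
  field_simp
  ring

lemma fejerK_zero {A : ℝ} (hA : 0 < A) : fejerK A 0 = A / 2 := by
  have hd : ∀ t ∈ Set.uIcc 0 A, HasDerivAt (fun t : ℝ => t - t ^ 2 / (2 * A))
      ((1 - t / A) * Real.cos (t * 0)) t := by
    intro t _
    refine ((hasDerivAt_id' t).sub
      (((hasDerivAt_id' t).pow 2).div_const (2 * A))).congr_deriv ?_
    simp
    field_simp
  unfold fejerK
  rw [intervalIntegral.integral_eq_sub_of_hasDerivAt hd
    (Continuous.intervalIntegrable (by fun_prop) _ _)]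
  field_simp
  ring

lemma fejerK_nonneg {A : ℝ} (hA : 0 < A) (x : ℝ) : 0 ≤ fejerK A x := by
  by_cases hx : x = 0
  · rw [hx, fejerK_zero hA]; positivity
  · rw [fejerK_eq hA hx]
    have := Real.cos_le_one (A * x)
    exact div_nonneg (by linarith) (by positivity)

lemma fejerK_ge {A : ℝ} (hA : 0 < A) {x : ℝ} (hx : |A * x| ≤ Real.pi) :
    2 * A / Real.pi ^ 2 ≤ fejerK A x := by
  have hpi := Real.pi_gt_three
  by_cases h0 : x = 0
  · rw [h0, fejerK_zero hA, div_le_div_iff₀ (by positivity) (by norm_num)]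
    nlinarith [mul_pos hA (show 0 < Real.pi ^ 2 - 4 by nlinarith)]
  · rw [fejerK_eq hA h0, le_div_iff₀ (by positivity)]
    have := Real.cos_le_one_sub_mul_cos_sq hx
    have e : 2 * A / Real.pi ^ 2 * (A * x ^ 2) = 2 / Real.pi ^ 2 * (A * x) ^ 2 := by ring
    linarith

lemma fejerK_le {A : ℝ} (hA : 0 < A) (x : ℝ) : fejerK A x ≤ A := by
  have h : fejerK A x ≤ ∫ _t in (0 : ℝ)..A, (1 : ℝ) := by
    refine intervalIntegral.integral_mono_on hA.le
      (Continuous.intervalIntegrable (by fun_prop) _ _) (by simp) ?_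
    intro t ht
    have h1 : t / A ≤ 1 := (div_le_one hA).2 ht.2
    have h2 : 0 ≤ t / A := div_nonneg ht.1 hA.le
    nlinarith [Real.cos_le_one (t * x)]
  simpa using h

lemma fejerK_le' {A : ℝ} (hA : 0 < A) {x : ℝ} (hx : x ≠ 0) : fejerK A x ≤ 2 / (A * x ^ 2) := by
  rw [fejerK_eq hA hx]
  gcongr
  linarith [Real.neg_one_le_cos (A * x)]

/-- The exponential sum with real coefficients `a j` and frequencies `x j`. -/
noncomputable def expSum {ι : Type*} (s : Finset ι) (a x : ι → ℝ) (t : ℝ) : ℂ :=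
  ∑ j ∈ s, (a j : ℂ) * Complex.exp (-(Complex.I * t * x j))

section
variable {ι : Type*} (s : Finset ι) (a x : ι → ℝ)

lemma expSum_norm_sq (t : ℝ) : ‖expSum s a x t‖ ^ 2 =
    ∑ j ∈ s, ∑ k ∈ s, a j * a k * Real.cos (t * (x j - x k)) := by
  have e : ∀ j, (a j : ℂ) * Complex.exp (-(Complex.I * t * x j)) =
      ((a j * Real.cos (t * x j) : ℝ) : ℂ) - ((a j * Real.sin (t * x j) : ℝ) : ℂ) * Complex.I := by
    intro j
    have : -(Complex.I * t * x j) = ((-(t * x j) : ℝ) : ℂ) * Complex.I := by push_cast; ring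
    rw [this, Complex.exp_mul_I, ← Complex.ofReal_cos, ← Complex.ofReal_sin]
    simp only [Real.cos_neg, Real.sin_neg]
    push_cast
    ring
  have e2 : expSum s a x t = ((∑ j ∈ s, a j * Real.cos (t * x j) : ℝ) : ℂ) +
      ((-∑ j ∈ s, a j * Real.sin (t * x j) : ℝ) : ℂ) * Complex.I := by
    unfold expSum
    simp only [e, Finset.sum_sub_distrib, ← Finset.sum_mul]
    push_cast
    ring
  rw [e2, ← Complex.normSq_eq_norm_sq, Complex.normSq_add_mul_I, neg_sq, sq, sq,
    Finset.sum_mul_sum, Finset.sum_mul_sum, ← Finset.sum_add_distrib]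
  refine Finset.sum_congr rfl fun j _ => ?_
  rw [← Finset.sum_add_distrib]
  refine Finset.sum_congr rfl fun k _ => ?_
  rw [mul_sub, Real.cos_sub]
  ring

lemma expSum_continuous : Continuous (expSum s a x) := by
  unfold expSum
  fun_prop

lemma integral_fejer_expSum (A : ℝ) : ∫ t in (0 : ℝ)..A, (1 - t / A) * ‖expSum s a x t‖ ^ 2 =
    ∑ j ∈ s, ∑ k ∈ s, a j * a k * fejerK A (x j - x k) := by
  simp only [expSum_norm_sq, Finset.mul_sum]
  rw [intervalIntegral.integral_finsetSum
    (fun j _ => Continuous.intervalIntegrable (by fun_prop) _ _)]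
  refine Finset.sum_congr rfl fun j _ => ?_
  rw [intervalIntegral.integral_finsetSum
    (fun j _ => Continuous.intervalIntegrable (by fun_prop) _ _)]
  refine Finset.sum_congr rfl fun k _ => ?_
  unfold fejerK
  rw [← intervalIntegral.integral_const_mul]
  congr 1
  ext t
  ring

variable {s a}

lemma expSum_lower (ha : ∀ j ∈ s, 0 ≤ a j) {T : ℝ} (hT : 0 < T) :
    T * (∑ j ∈ s, ∑ k ∈ s, if |x j - x k| ≤ 2 * Real.pi / T then a j * a k else 0) ≤
      Real.pi ^ 2 * ∫ t in (0 : ℝ)..T, ‖expSum s a x t‖ ^ 2 := by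
  have hc := expSum_continuous s a x
  have h1 : ∫ t in (0 : ℝ)..(T / 2), (1 - t / (T / 2)) * ‖expSum s a x t‖ ^ 2 ≤
      ∫ t in (0 : ℝ)..T, ‖expSum s a x t‖ ^ 2 := by
    calc _ ≤ ∫ t in (0 : ℝ)..(T / 2), ‖expSum s a x t‖ ^ 2 := by
          refine intervalIntegral.integral_mono_on (by positivity)
            (Continuous.intervalIntegrable (by fun_prop) _ _)
            (Continuous.intervalIntegrable (by fun_prop) _ _) ?_
          intro t ht
          have : 0 ≤ t / (T / 2) := div_nonneg ht.1 (by positivity)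
          nlinarith [sq_nonneg ‖expSum s a x t‖]
      _ ≤ _ := by
          refine intervalIntegral.integral_mono_interval le_rfl (by positivity) (by linarith) ?_
            (Continuous.intervalIntegrable (by fun_prop) _ _)
          exact Filter.Eventually.of_forall fun t => by simp
  rw [integral_fejer_expSum] at h1
  refine le_trans ?_ (mul_le_mul_of_nonneg_left h1 (by positivity))
  simp only [Finset.mul_sum]
  refine Finset.sum_le_sum fun j hj => Finset.sum_le_sum fun k hk => ?_
  have hjk := mul_nonneg (ha j hj) (ha k hk)
  have hpi := Real.pi_pos
  split_ifs with h
  · have hx : |T / 2 * (x j - x k)| ≤ Real.pi := by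
      rw [abs_mul, abs_of_pos (by positivity : 0 < T / 2)]
      rw [le_div_iff₀ hT] at h
      linarith
    have := fejerK_ge (by positivity : 0 < T / 2) hx
    rw [div_le_iff₀ (by positivity)] at this
    nlinarith [mul_le_mul_of_nonneg_left this hjk]
  · have := fejerK_nonneg (by positivity : 0 < T / 2) (x j - x k)
    rw [mul_zero]
    positivity

/-- The bound, up to a factor `T`, for `fejerK (2 * T)` at the difference of two frequencies
lying in bins of length `2π/T` that are `d` steps apart. At `d = 0` the first summand is `2 / 0 = 0`,
hence the separate second summand. -/
noncomputable def binG (d : ℤ) : ℝ := 2 * (1 / (d : ℝ) ^ 2) + if d = 0 then 2 else 0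

lemma binG_nonneg (d : ℤ) : 0 ≤ binG d := by
  unfold binG
  split_ifs <;> positivity

lemma binG_neg (d : ℤ) : binG (-d) = binG d := by simp [binG]

lemma summable_binG : Summable binG := by
  refine ((Real.summable_one_div_int_pow.2 (by norm_num : 1 < 2)).mul_left 2).add ?_
  exact summable_of_ne_finset_zero (s := {0}) fun b hb => by simpa using hb

lemma fejerK_le_binG {T : ℝ} (hT : 0 < T) (u v : ℝ) :
    fejerK (2 * T) (u - v) ≤
      T * binG (⌊u * T / (2 * Real.pi)⌋ - ⌊v * T / (2 * Real.pi)⌋) := by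
  have hpi := Real.pi_gt_three
  set b := ⌊u * T / (2 * Real.pi)⌋ with hb
  set c := ⌊v * T / (2 * Real.pi)⌋ with hc
  obtain ⟨d, hd⟩ : ∃ d, d = b - c := ⟨_, rfl⟩
  rw [← hd]
  have htriv := fejerK_le (by positivity : 0 < 2 * T) (u - v)
  by_cases hd0 : d = 0
  · simp only [binG, hd0]; simpa [mul_comm] using htriv
  have hdr : (d : ℝ) ≠ 0 := by exact_mod_cast hd0
  simp only [binG, hd0, if_false, add_zero]
  by_cases hd1 : |d| ≤ 1
  · have : d ^ 2 = 1 := by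
      rcases abs_le.1 hd1 with ⟨h1, h2⟩
      have : d = 1 ∨ d = -1 := by omega
      rcases this with h | h <;> simp [h]
    have : (d : ℝ) ^ 2 = 1 := by exact_mod_cast this
    rw [this]; linarith
  push Not at hd1
  -- For `|d| ≥ 2` the frequencies are at least `|d| - 1 ≥ |d| / 2` bins apart.
  have hdd : (2 : ℝ) ≤ |(d : ℝ)| := by exact_mod_cast hd1
  have hy : |(d : ℝ)| / 2 ≤ |(u - v) * T / (2 * Real.pi)| := by
    have e : (u - v) * T / (2 * Real.pi) = u * T / (2 * Real.pi) - v * T / (2 * Real.pi) := by ring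
    have b1 := Int.floor_le (u * T / (2 * Real.pi))
    have b2 := Int.lt_floor_add_one (u * T / (2 * Real.pi))
    have c1 := Int.floor_le (v * T / (2 * Real.pi))
    have c2 := Int.lt_floor_add_one (v * T / (2 * Real.pi))
    rw [← hb] at b1 b2
    rw [← hc] at c1 c2
    have hdr' : (d : ℝ) = b - c := by rw [hd]; push_cast; ring
    rw [e]
    rcases abs_cases (d : ℝ) with ⟨h, _⟩ | ⟨h, _⟩ <;>
      rcases abs_cases (u * T / (2 * Real.pi) - v * T / (2 * Real.pi)) with ⟨h', _⟩ | ⟨h', _⟩ <;>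
      rw [h] at hdd ⊢ <;> rw [h'] <;> linarith
  have hy2 : (Real.pi * d) ^ 2 ≤ ((u - v) * T) ^ 2 := by
    rw [sq_le_sq]
    rw [abs_div, abs_of_pos (by positivity : 0 < 2 * Real.pi), le_div_iff₀ (by positivity)] at hy
    rw [abs_mul, abs_of_pos (by positivity : 0 < Real.pi)]
    linarith
  have hpos : 0 < (Real.pi * d) ^ 2 := by positivity
  have huv : u - v ≠ 0 := by
    rintro h
    rw [h] at hy2
    simp only [zero_mul] at hy2
    linarith
  refine (fejerK_le' (by positivity) huv).trans ?_
  have hd2 : 0 < (d : ℝ) ^ 2 := by positivity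
  have : T * (2 * (1 / (d : ℝ) ^ 2)) = 2 * T / d ^ 2 := by ring
  rw [this, div_le_div_iff₀ (by positivity) hd2]
  nlinarith [mul_pos hd2 (show 0 < Real.pi ^ 2 - 1 by nlinarith)]

/-- Schur's test for the kernel `binG (b j - b k)`, in terms of the total masses of the bins. -/
lemma schur_binG (b : ι → ℤ) :
    ∑ j ∈ s, ∑ k ∈ s, a j * a k * binG (b j - b k) ≤
      (∑' d, binG d) * ∑ j ∈ s, ∑ k ∈ s, if b j = b k then a j * a k else 0 := by
  set S := s.image b with hS
  set w : ℤ → ℝ := fun l => ∑ j ∈ s, if b j = l then a j else 0 with hw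
  -- A sum over the finite set of shifts `l - l'` is at most the full series.
  have hG : ∀ l, ∑ l' ∈ S, binG (l - l') ≤ ∑' d, binG d := by
    intro l
    rw [← Finset.sum_image (f := binG) (g := fun l' => l - l')
      (fun p _ q _ h => by simpa using h)]
    exact summable_binG.sum_le_tsum _ (fun _ _ => binG_nonneg _)
  have hex : ∀ f : ℤ → ℝ, ∀ j ∈ s, ∑ l ∈ S, (if b j = l then f l else 0) = f (b j) := by
    intro f j hj
    rw [Finset.sum_ite_eq, if_pos (Finset.mem_image_of_mem b hj)]
  have hsum : ∀ f : ℤ → ℝ, ∑ j ∈ s, a j * f (b j) = ∑ l ∈ S, w l * f l := by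
    intro f
    simp only [hw, Finset.sum_mul]
    rw [Finset.sum_comm]
    refine Finset.sum_congr rfl fun j hj => ?_
    rw [← hex (fun l => a j * f l) j hj]
    refine Finset.sum_congr rfl fun l _ => ?_
    split_ifs <;> simp
  have hL : ∑ j ∈ s, ∑ k ∈ s, a j * a k * binG (b j - b k) =
      ∑ l ∈ S, ∑ l' ∈ S, w l * w l' * binG (l - l') := by
    have := hsum fun l => ∑ k ∈ s, a k * binG (l - b k)
    simp only [Finset.mul_sum, mul_assoc] at this ⊢
    rw [this]
    refine Finset.sum_congr rfl fun l _ => ?_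
    rw [← Finset.mul_sum, hsum fun l' => binG (l - l'), Finset.mul_sum]
  have hR : (∑ j ∈ s, ∑ k ∈ s, if b j = b k then a j * a k else 0) = ∑ l ∈ S, w l ^ 2 := by
    simp only [sq]
    rw [← hsum w]
    refine Finset.sum_congr rfl fun j _ => ?_
    simp only [hw, Finset.mul_sum]
    refine Finset.sum_congr rfl fun k _ => ?_
    simp only [eq_comm, mul_ite, mul_zero]
  rw [hL, hR]
  calc _ ≤ ∑ l ∈ S, ∑ l' ∈ S, (w l ^ 2 * binG (l - l') / 2 + w l' ^ 2 * binG (l' - l) / 2) := by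
        refine Finset.sum_le_sum fun l _ => Finset.sum_le_sum fun l' _ => ?_
        rw [← neg_sub l l', binG_neg]
        nlinarith [mul_nonneg (sq_nonneg (w l - w l')) (binG_nonneg (l - l'))]
    _ = ∑ l ∈ S, w l ^ 2 * ∑ l' ∈ S, binG (l - l') := by
        simp only [Finset.sum_add_distrib]
        rw [Finset.sum_comm (f := fun l l' => w l' ^ 2 * binG (l' - l) / 2),
          ← Finset.sum_add_distrib]
        refine Finset.sum_congr rfl fun l _ => ?_
        rw [← Finset.sum_add_distrib, Finset.mul_sum]
        refine Finset.sum_congr rfl fun l' _ => by ring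
    _ ≤ ∑ l ∈ S, w l ^ 2 * ∑' d, binG d :=
        Finset.sum_le_sum fun l _ => mul_le_mul_of_nonneg_left (hG l) (sq_nonneg _)
    _ = _ := by rw [← Finset.sum_mul, mul_comm]

lemma expSum_upper (ha : ∀ j ∈ s, 0 ≤ a j) {T : ℝ} (hT : 0 < T) :
    ∫ t in (0 : ℝ)..T, ‖expSum s a x t‖ ^ 2 ≤ 2 * (∑' d, binG d) * T *
      (∑ j ∈ s, ∑ k ∈ s, if |x j - x k| ≤ 2 * Real.pi / T then a j * a k else 0) := by
  have hc := expSum_continuous s a x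
  have hpi := Real.pi_pos
  have h1 : ∫ t in (0 : ℝ)..T, ‖expSum s a x t‖ ^ 2 ≤
      2 * ∫ t in (0 : ℝ)..(2 * T), (1 - t / (2 * T)) * ‖expSum s a x t‖ ^ 2 := by
    rw [← intervalIntegral.integral_const_mul]
    calc _ ≤ ∫ t in (0 : ℝ)..T, 2 * ((1 - t / (2 * T)) * ‖expSum s a x t‖ ^ 2) := by
          refine intervalIntegral.integral_mono_on hT.le
            (Continuous.intervalIntegrable (by fun_prop) _ _)
            (Continuous.intervalIntegrable (by fun_prop) _ _) ?_
          intro t ht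
          have : t / (2 * T) ≤ 1 / 2 := by
            rw [div_le_div_iff₀ (by positivity) (by norm_num)]; linarith [ht.2]
          nlinarith [sq_nonneg ‖expSum s a x t‖]
      _ ≤ _ := by
          refine intervalIntegral.integral_mono_interval le_rfl hT.le (by linarith) ?_
            (Continuous.intervalIntegrable (by fun_prop) _ _)
          refine (MeasureTheory.ae_restrict_iff' measurableSet_Ioc).2
            (Filter.Eventually.of_forall fun t ht => ?_)
          have : t / (2 * T) ≤ 1 := (div_le_one (by positivity)).2 ht.2
          have h0 : 0 ≤ 1 - t / (2 * T) := by linarith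
          simp only [Pi.zero_apply]
          positivity
  rw [integral_fejer_expSum] at h1
  have hS := schur_binG (s := s) (a := a) (fun j => ⌊x j * T / (2 * Real.pi)⌋)
  have h2 : ∑ j ∈ s, ∑ k ∈ s, a j * a k * fejerK (2 * T) (x j - x k) ≤
      T * ∑ j ∈ s, ∑ k ∈ s, a j * a k *
        binG (⌊x j * T / (2 * Real.pi)⌋ - ⌊x k * T / (2 * Real.pi)⌋) := by
    simp only [Finset.mul_sum]
    refine Finset.sum_le_sum fun j hj => Finset.sum_le_sum fun k hk => ?_
    have := mul_le_mul_of_nonneg_left (fejerK_le_binG hT (x j) (x k))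
      (mul_nonneg (ha j hj) (ha k hk))
    linarith
  have h3 : (∑ j ∈ s, ∑ k ∈ s, if ⌊x j * T / (2 * Real.pi)⌋ = ⌊x k * T / (2 * Real.pi)⌋
        then a j * a k else 0) ≤
      ∑ j ∈ s, ∑ k ∈ s, if |x j - x k| ≤ 2 * Real.pi / T then a j * a k else 0 := by
    refine Finset.sum_le_sum fun j hj => Finset.sum_le_sum fun k hk => ?_
    have hjk := mul_nonneg (ha j hj) (ha k hk)
    by_cases h : ⌊x j * T / (2 * Real.pi)⌋ = ⌊x k * T / (2 * Real.pi)⌋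
    · have hlt := Int.abs_sub_lt_one_of_floor_eq_floor h
      rw [if_pos h, if_pos]
      rw [← sub_div, ← sub_mul, abs_div, abs_mul, abs_of_pos hT,
        abs_of_pos (by positivity : 0 < 2 * Real.pi), div_lt_one (by positivity)] at hlt
      rw [le_div_iff₀ hT]
      exact hlt.le
    · rw [if_neg h]
      split_ifs <;> simp [hjk]
  have hg : 0 ≤ ∑' d, binG d := tsum_nonneg binG_nonneg
  have h4 := mul_le_mul_of_nonneg_left (hS.trans (mul_le_mul_of_nonneg_left h3 hg)) hT.le
  linarith

end

/-- The product of the two Dirichlet polynomials at `it` as one exponential sum over pairs, with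
frequencies `log (m n)`. -/
lemma dirichlet_eq_expSum {𝓜 : Finset ℕ} (hM : ∀ m ∈ 𝓜, 0 < m) (N : ℕ) (q : ℕ → ℝ) (t : ℝ) :
    (∑ m ∈ 𝓜, (m : ℂ) ^ (-(Complex.I * (t : ℂ)))) *
      (∑ n ∈ Finset.Icc 1 N, (q n : ℂ) * (n : ℂ) ^ (-(Complex.I * (t : ℂ)))) =
    expSum (𝓜 ×ˢ Finset.Icc 1 N) (fun p => q p.2)
      (fun p => Real.log ((p.1 : ℝ) * (p.2 : ℝ))) t := by
  have hpow : ∀ n : ℕ, 0 < n → (n : ℂ) ^ (-(Complex.I * (t : ℂ))) =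
      Complex.exp (-(Complex.I * t * (Real.log n : ℝ))) := by
    intro n hn
    rw [Complex.cpow_def_of_ne_zero (by exact_mod_cast hn.ne'), Complex.ofReal_log (by positivity)]
    congr 1
    push_cast
    ring
  unfold expSum
  rw [Finset.sum_mul_sum, Finset.sum_product]
  refine Finset.sum_congr rfl fun m hm => Finset.sum_congr rfl fun n hn => ?_
  have hm0 := hM m hm
  have hn0 : 0 < n := (Finset.mem_Icc.1 hn).1
  dsimp only
  rw [hpow m hm0, hpow n hn0, Real.log_mul (by positivity) (by positivity), mul_left_comm,
    ← Complex.exp_add]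
  congr 2
  push_cast
  ring

/-- The four-fold sum over close products as a double sum over pairs `(m, n)`. -/
lemma quad_sum_eq {𝓜 : Finset ℕ} (hM : ∀ m ∈ 𝓜, 0 < m) (N : ℕ) (q : ℕ → ℝ) (δ : ℝ) :
    (∑ m₁ ∈ 𝓜, ∑ m₂ ∈ 𝓜, ∑ n₁ ∈ Finset.Icc 1 N, ∑ n₂ ∈ Finset.Icc 1 N,
      (if |Real.log ((m₁ * n₁ : ℝ) / (m₂ * n₂ : ℝ))| ≤ δ then q n₁ * q n₂ else 0)) =
    ∑ j ∈ 𝓜 ×ˢ Finset.Icc 1 N, ∑ k ∈ 𝓜 ×ˢ Finset.Icc 1 N,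
      if |Real.log ((j.1 : ℝ) * (j.2 : ℝ)) - Real.log ((k.1 : ℝ) * (k.2 : ℝ))| ≤ δ
        then q j.2 * q k.2 else 0 := by
  simp only [Finset.sum_product]
  refine Finset.sum_congr rfl fun m₁ hm₁ => ?_
  rw [Finset.sum_comm]
  refine Finset.sum_congr rfl fun n₁ hn₁ => Finset.sum_congr rfl fun m₂ hm₂ =>
    Finset.sum_congr rfl fun n₂ hn₂ => ?_
  have h1 := hM m₁ hm₁
  have h2 := hM m₂ hm₂
  have h3 : 0 < n₁ := (Finset.mem_Icc.1 hn₁).1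
  have h4 : 0 < n₂ := (Finset.mem_Icc.1 hn₂).1
  rw [Real.log_div (by positivity) (by positivity)]

/-- Theorem 4 (i), second part, of Heath-Brown, "The Differences Between Consecutive
Smooth Numbers": there are absolute constants `C₁, C₂ > 0` such that in the mean value
setup with `ε_m = 1` for all `m ∈ 𝓜`, one has `𝓘(𝓜,Q) ≤ C₁ · T · 𝓙(𝓜,Q)` and
`T · 𝓙(𝓜,Q) ≤ C₂ · 𝓘(𝓜,Q)`. -/
theorem mean_value_I_comparable_T_J :
    ∃ C₁ : ℝ, 0 < C₁ ∧ ∃ C₂ : ℝ, 0 < C₂ ∧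
      ∀ T : ℝ, 20 ≤ T →
      ∀ 𝓜 : Finset ℕ, (∀ m ∈ 𝓜, 0 < m ∧ (m : ℝ) ≤ T) →
      ∀ N : ℕ, 0 < N →
      ∀ q : ℕ → ℝ, (∀ n ∈ Finset.Icc 1 N, 0 ≤ q n ∧ q n ≤ 1) →
        ((∫ t in (0 : ℝ)..T,
            ‖(∑ m ∈ 𝓜, (m : ℂ) ^ (-(Complex.I * (t : ℂ)))) *
              (∑ n ∈ Finset.Icc 1 N, (q n : ℂ) * (n : ℂ) ^ (-(Complex.I * (t : ℂ))))‖ ^ 2) ≤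
          C₁ * T *
            ∑ m₁ ∈ 𝓜, ∑ m₂ ∈ 𝓜, ∑ n₁ ∈ Finset.Icc 1 N, ∑ n₂ ∈ Finset.Icc 1 N,
              (if |Real.log ((m₁ * n₁ : ℝ) / (m₂ * n₂ : ℝ))| ≤ 2 * Real.pi / T
                then q n₁ * q n₂ else 0)) ∧
        T * (∑ m₁ ∈ 𝓜, ∑ m₂ ∈ 𝓜, ∑ n₁ ∈ Finset.Icc 1 N, ∑ n₂ ∈ Finset.Icc 1 N,
              (if |Real.log ((m₁ * n₁ : ℝ) / (m₂ * n₂ : ℝ))| ≤ 2 * Real.pi / T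
                then q n₁ * q n₂ else 0)) ≤
          C₂ * ∫ t in (0 : ℝ)..T,
            ‖(∑ m ∈ 𝓜, (m : ℂ) ^ (-(Complex.I * (t : ℂ)))) *
              (∑ n ∈ Finset.Icc 1 N, (q n : ℂ) * (n : ℂ) ^ (-(Complex.I * (t : ℂ))))‖ ^ 2 := by
  refine ⟨2 * (∑' d, binG d), ?_, Real.pi ^ 2, by positivity, ?_⟩
  · have h := summable_binG.le_tsum 0 (fun d _ => binG_nonneg d)
    have h0 : binG 0 = 2 := by simp [binG]
    linarith
  · intro T hT 𝓜 hM N _ q hq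
    have hM' : ∀ m ∈ 𝓜, 0 < m := fun m hm => (hM m hm).1
    have hT0 : 0 < T := by linarith
    have ha : ∀ p ∈ 𝓜 ×ˢ Finset.Icc 1 N, 0 ≤ (fun p : ℕ × ℕ => q p.2) p :=
      fun p hp => (hq p.2 (Finset.mem_product.1 hp).2).1
    simp only [dirichlet_eq_expSum hM' N q, quad_sum_eq hM' N q]
    exact ⟨expSum_upper _ ha hT0, expSum_lower _ ha hT0⟩
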